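/- arXiv:2202.12570 — 3 statements merged into one kernel-verified Lean document; each statement's English description precedes it below -/
import Mathlib

section
/- Affine relation from an invertible system of log-density equations (Step II of the identifiability proof): Let n be a positive integer, α a nonempty set, and 𝔅 a set. Let T, T′ : α → ℝⁿ, let η, η′ : 𝔅 → ℝⁿ, let a, a′ : 𝔅 → ℝ, and suppose there exist points B⁰, B¹, …, Bⁿ ∈ 𝔅 such that: (1) for every z ∈ α and every ℓ ∈ {0, 1, …, n}, ⟨T(z), η(Bˡ)⟩ + a(Bˡ) = ⟨T′(z), η′(Bˡ)⟩ + a′(Bˡ); and (2) the n × n matrix E whose ℓ-th column is η(Bˡ) − η(B⁰) (ℓ = 1, …, n) is invertible. Then there exist an n × n real matrix A and a vector c ∈ ℝⁿ such that T(z) = A · T′(z) + c for every z ∈ α. -/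
/-- **Affine relation from an invertible system of log-density equations**
(Step II of the identifiability proof).  If the log-density identities
`⟨T z, η Bˡ⟩ + a Bˡ = ⟨T' z, η' Bˡ⟩ + a' Bˡ` hold for all `z` and for `n + 1`
bags `B⁰, …, Bⁿ`, and the matrix of differences `η (Bˡ) - η (B⁰)` is
invertible, then `T` and `T'` are related by an affine transformation. -/
theorem affine_relation_of_invertible_system
    (n : ℕ) (hn : 0 < n) (α 𝔅 : Type*) [Nonempty α]
    (T T' : α → Fin n → ℝ) (η η' : 𝔅 → Fin n → ℝ) (a a' : 𝔅 → ℝ)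
    (B : Fin (n + 1) → 𝔅)
    (h1 : ∀ (z : α) (ℓ : Fin (n + 1)),
      (∑ i, T z i * η (B ℓ) i) + a (B ℓ) = (∑ i, T' z i * η' (B ℓ) i) + a' (B ℓ))
    (h2 : IsUnit (Matrix.of fun (i ℓ : Fin n) => η (B ℓ.succ) i - η (B 0) i)) :
    ∃ (A : Matrix (Fin n) (Fin n) ℝ) (c : Fin n → ℝ),
      ∀ z : α, T z = A.mulVec (T' z) + c := by
  obtain ⟨F, hF⟩ := h2.exists_right_inv
  set E : Matrix (Fin n) (Fin n) ℝ :=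
    Matrix.of fun (i ℓ : Fin n) => η (B ℓ.succ) i - η (B 0) i with hE
  let E' : Matrix (Fin n) (Fin n) ℝ :=
    Matrix.of fun (i ℓ : Fin n) => η' (B ℓ.succ) i - η' (B 0) i
  let d : Fin n → ℝ := fun ℓ =>
    (a' (B ℓ.succ) - a' (B 0)) - (a (B ℓ.succ) - a (B 0))
  refine ⟨(E' * F).transpose, Matrix.vecMul d F, fun z => ?_⟩
  have key : Matrix.vecMul (T z) E = Matrix.vecMul (T' z) E' + d := by
    funext ℓ
    have e1 := h1 z ℓ.succ
    have e0 := h1 z 0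
    simp only [hE, E', d, Matrix.vecMul, dotProduct, Matrix.of_apply, Pi.add_apply,
      mul_sub, Finset.sum_sub_distrib]
    linarith
  calc T z = Matrix.vecMul (Matrix.vecMul (T z) E) F := by
        rw [Matrix.vecMul_vecMul, hF, Matrix.vecMul_one]
    _ = _ := by
        rw [key, Matrix.add_vecMul, Matrix.vecMul_vecMul, Matrix.mulVec_transpose]
end

section
/- Existence of points with linearly independent differences of sufficient statistics: Let n be a positive integer, α a nonempty set, and T : α → ℝⁿ. If the constant function 1 together with the n component functions T₁, …, Tₙ : α → ℝ are linearly independent in the real vector space of functions from α to ℝ, then there exist points z⁰, z¹, …, zⁿ ∈ α such that the n vectors T(z¹) − T(z⁰), …, T(zⁿ) − T(z⁰) are linearly independent in ℝⁿ. -/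
/-- **Existence of points with linearly independent differences of sufficient
statistics.**  If the constant function `1` together with the component
functions `T₁, …, Tₙ : α → ℝ` are linearly independent, then there exist
points `z⁰, z¹, …, zⁿ ∈ α` such that the `n` vectors
`T (zˡ) - T (z⁰)`, `ℓ = 1, …, n`, are linearly independent in `ℝⁿ`. -/
theorem exists_points_linearIndependent_diff
    (n : ℕ) (hn : 0 < n) (α : Type*) [Nonempty α] (T : α → Fin n → ℝ)
    (hind : ∀ (a₀ : ℝ) (a : Fin n → ℝ),
      (∀ z : α, a₀ + ∑ j, a j * T z j = 0) → a₀ = 0 ∧ a = 0) :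
    ∃ z : Fin (n + 1) → α,
      LinearIndependent ℝ (fun ℓ : Fin n => T (z ℓ.succ) - T (z 0)) := by
  obtain ⟨x₀⟩ := ‹Nonempty α›
  have hspan : Submodule.span ℝ (Set.range fun x => T x - T x₀) = ⊤ := by
    by_contra hne
    obtain ⟨f, hf0, hf⟩ := Submodule.exists_le_ker_of_lt_top _ (lt_top_iff_ne_top.mpr hne)
    have hrep : ∀ v : Fin n → ℝ, f v = ∑ j, f (Pi.single j 1) * v j := by
      intro v
      conv_lhs => rw [pi_eq_sum_univ' v]
      simp [map_sum, mul_comm, Pi.single_apply, Pi.single, Function.update]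
    have key := hind (-f (T x₀)) (fun j => f (Pi.single j 1)) (by
      intro z
      have hz : f (T z - T x₀) = 0 := hf (Submodule.subset_span ⟨z, rfl⟩)
      rw [map_sub] at hz
      rw [← hrep (T z)]
      linarith)
    apply hf0
    ext v
    have := congrFun key.2 v
    simpa using this
  have hfr : Module.finrank ℝ (Submodule.span ℝ (Set.range fun x => T x - T x₀)) = n := by
    rw [hspan]; simp
  obtain ⟨g, hg, -, hli⟩ :=
    Submodule.exists_fun_fin_finrank_span_eq ℝ (Set.range fun x => T x - T x₀)
  choose p hp using hg
  refine ⟨Fin.cons x₀ (fun i => p (Fin.cast hfr.symm i)), ?_⟩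
  have heq : (fun l : Fin n => T ((Fin.cons x₀ (fun i => p (Fin.cast hfr.symm i)) :
      Fin (n + 1) → α) l.succ) - T ((Fin.cons x₀ (fun i => p (Fin.cast hfr.symm i)) :
      Fin (n + 1) → α) 0)) = g ∘ Fin.cast hfr.symm := by
    funext i
    simpa using hp (Fin.cast hfr.symm i)
  rw [heq]
  exact hli.comp (Fin.cast hfr.symm) (Fin.cast_injective _)
end

section
/- Invertibility of the linear part of the affine relation (Step III of the identifiability proof): Let n be a positive integer, α a nonempty set, T, T′ : α → ℝⁿ, A an n × n real matrix, and c ∈ ℝⁿ, such that T(z) = A · T′(z) + c for every z ∈ α. If the constant function 1 together with the n component functions T₁, …, Tₙ : α → ℝ are linearly independent in the real vector space of functions from α to ℝ, then the matrix A is invertible. -/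
/-- **Invertibility of the linear part of the affine relation**
(Step III of the identifiability proof).  If `T z = A · T' z + c` for every
`z`, and the constant function `1` together with the `n` component functions
`T₁, …, Tₙ` are linearly independent in the space of functions `α → ℝ`,
then the matrix `A` is invertible. -/
theorem isUnit_of_affine_relation
    (n : ℕ) (hn : 0 < n) (α : Type*) [Nonempty α]
    (T T' : α → Fin n → ℝ) (A : Matrix (Fin n) (Fin n) ℝ) (c : Fin n → ℝ)
    (haff : ∀ z : α, T z = A.mulVec (T' z) + c)
    (hind : ∀ (a₀ : ℝ) (a : Fin n → ℝ),
      (∀ z : α, a₀ + ∑ j, a j * T z j = 0) → a₀ = 0 ∧ a = 0) :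
    IsUnit A := by
  rw [Matrix.isUnit_iff_isUnit_det, isUnit_iff_ne_zero]
  intro hdet
  obtain ⟨v, hv, hvA⟩ := Matrix.exists_vecMul_eq_zero_iff.mpr hdet
  refine hv (hind (-(v ⬝ᵥ c)) v fun z => ?_).2
  change -(v ⬝ᵥ c) + v ⬝ᵥ T z = 0
  rw [haff, dotProduct_add, Matrix.dotProduct_mulVec, hvA, zero_dotProduct]
  ring
end
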